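/- Under the hypotheses of the Galerkin a priori estimate — μ ≥ 0; S : ℤ³ → ℂ with S(k,m,n) = 0 whenever kmn = 0, S(k,m,n) = S(k,n,m), S(k,m,n) = S(m,n,k), S(k,m,n) = conj(S(−k,−m,−n)), and |S(k,m,n)| ≤ C·min{|k|^μ, |m|^μ, |n|^μ}; s > μ + 3/2; K_s = C·C_s·M_{s−μ−1} with C_s a constant such that |k|k|^{2s} + m|m|^{2s} + n|n|^{2s}| ≤ C_s(|k|^s|m|^s|n| + |n|^s|k|^s|m| + |m|^s|n|^s|k|) for all real k,m,n with k+m+n = 0, and M_σ = (2 Σ_{n=1}^∞ n^{−2σ})^{1/2} — suppose û : ℤ × ℝ → ℂ is differentiable in t, supported in |k| ≤ N, with û(0,t) = 0 and û(−k,t) = conj(û(k,t)), and solves ∂_t û(k,t) + ik Σ_{n∈ℤ} S(−k, k−n, n) û(k−n,t) û(n,t) = 0 for |k| ≤ N. Let g denote the initial data û(·,0). Then for every t with |t| < 1/(K_s ‖g‖_s), the solution satisfies ‖u(t)‖_s ≤ ‖g‖_s / (1 − K_s ‖g‖_s |t|); in particular the Galerkin approximation exists on the whole interval |t| < 1/(K_s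 ‖g‖_s). -/

import Mathlib

open scoped BigOperators

/-- The homogeneous Sobolev norm of order `s` of a Fourier coefficient sequence. -/
noncomputable def hnorm (s : ℝ) (u : ℤ → ℂ) : ℝ :=
  (∑' k : ℤ, |(k : ℝ)| ^ (2 * s) * ‖u k‖ ^ 2) ^ ((1 : ℝ) / 2)

/-- `M_σ = (2 Σ_{n=1}^∞ n^{−2σ})^{1/2}`. -/
noncomputable def Mconst (σ : ℝ) : ℝ :=
  Real.sqrt (2 * ∑' n : ℕ, ((n : ℝ) + 1) ^ (-(2 * σ)))

lemma gg_inner (F : Finset ℤ) (x : ℤ → ℝ) (c : ℤ) :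
    ∑ a ∈ F, ∑ b ∈ F, (if a + b + c = 0 then x a * x b else 0) ≤ ∑ a ∈ F, x a ^ 2 := by
  have h1 : ∀ y : ℤ → ℝ, (∀ a, 0 ≤ y a) →
      ∑ a ∈ F, ∑ b ∈ F, (if a + b + c = 0 then y a else 0) ≤ ∑ a ∈ F, y a := by
    intro y hy
    refine Finset.sum_le_sum fun a _ => ?_
    have : ∀ b ∈ F, (if a + b + c = 0 then y a else 0) = if b = -a - c then y a else 0 := by
      intro b _
      refine if_congr ⟨fun h => by omega, fun h => by omega⟩ rfl rfl
    rw [Finset.sum_congr rfl this, Finset.sum_ite_eq']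
    split_ifs
    · exact le_rfl
    · exact hy a
  have h2 : ∑ a ∈ F, ∑ b ∈ F, (if a + b + c = 0 then x b ^ 2 else 0) ≤ ∑ a ∈ F, x a ^ 2 := by
    rw [Finset.sum_comm]
    have := h1 (fun a => x a ^ 2) (fun a => sq_nonneg _)
    simpa only [add_comm] using this
  have h3 := h1 (fun a => x a ^ 2) (fun a => sq_nonneg _)
  have h4 : ∑ a ∈ F, ∑ b ∈ F, (if a + b + c = 0 then x a * x b else 0) ≤
      ∑ a ∈ F, ∑ b ∈ F, (1/2 * (if a + b + c = 0 then x a ^ 2 else 0)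
        + 1/2 * (if a + b + c = 0 then x b ^ 2 else 0)) := by
    refine Finset.sum_le_sum fun a _ => Finset.sum_le_sum fun b _ => ?_
    split_ifs
    · nlinarith [sq_nonneg (x a - x b)]
    · simp
  simp only [Finset.sum_add_distrib, ← Finset.mul_sum] at h4
  linarith

lemma gg_M (σ : ℝ) (hσ : 1 / 2 < σ) (F : Finset ℤ) :
    ∑ c ∈ F, (if c = 0 then (0 : ℝ) else |(c : ℝ)| ^ (-(2 * σ))) ≤ Mconst σ ^ 2 := by
  have hsum : Summable fun n : ℕ => ((n : ℝ) + 1) ^ (-(2 * σ)) := by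
    have := (Real.summable_nat_rpow (p := -(2 * σ))).2 (by linarith)
    have := (summable_nat_add_iff 1).2 this
    simpa using this
  have hpos : ∀ n : ℕ, 0 ≤ ((n : ℝ) + 1) ^ (-(2 * σ)) := fun n => by positivity
  rw [Mconst, Real.sq_sqrt (mul_nonneg zero_le_two (tsum_nonneg hpos))]
  set f : ℤ → ℝ := fun c => (if c = 0 then (0 : ℝ) else |(c : ℝ)| ^ (-(2 * σ))) with hf
  have e1 : ∀ n : ℕ, f ((n : ℤ) + 1) = ((n : ℝ) + 1) ^ (-(2 * σ)) := by
    intro n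
    have h : (n : ℤ) + 1 ≠ 0 := by omega
    simp only [hf, h, if_false]
    push_cast
    rw [abs_of_nonneg (by positivity)]
  have e2 : ∀ n : ℕ, f (-((n : ℤ) + 1)) = ((n : ℝ) + 1) ^ (-(2 * σ)) := by
    intro n
    have h : -((n : ℤ) + 1) ≠ 0 := by omega
    simp only [hf, h, if_false]
    push_cast
    rw [abs_neg, abs_of_nonneg (by positivity)]
  have hs1 : HasSum (fun n : ℕ => f ((n : ℤ) + 1)) (∑' n : ℕ, ((n : ℝ) + 1) ^ (-(2 * σ))) := by
    simp only [e1]; exact hsum.hasSum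
  have hs2 : HasSum (fun n : ℕ => f (-((n : ℤ) + 1))) (∑' n : ℕ, ((n : ℝ) + 1) ^ (-(2 * σ))) := by
    simp only [e2]; exact hsum.hasSum
  have h := HasSum.of_add_one_of_neg_add_one hs1 hs2
  have h0 : f 0 = 0 := by simp [hf]
  rw [h0] at h
  have := sum_le_hasSum F (fun i _ => by simp only [hf]; split_ifs <;> positivity) h
  linarith

lemma gg_lin (s μ : ℝ) (hs : μ + 3 / 2 < s) (F : Finset ℤ) (v : ℤ → ℂ) (hv0 : v 0 = 0) :
    ∑ c ∈ F, |(c : ℝ)| ^ (1 + μ) * ‖v c‖ ≤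
      Mconst (s - μ - 1) * Real.sqrt (∑ k ∈ F, |(k : ℝ)| ^ (2 * s) * ‖v k‖ ^ 2) := by
  have hcs := Finset.sum_mul_sq_le_sq_mul_sq F
    (fun c : ℤ => if c = 0 then (0 : ℝ) else |(c : ℝ)| ^ (-(s - μ - 1)))
    (fun c : ℤ => |(c : ℝ)| ^ s * ‖v c‖)
  have e1 : ∑ c ∈ F, (if c = 0 then (0 : ℝ) else |(c : ℝ)| ^ (-(s - μ - 1))) *
      (|(c : ℝ)| ^ s * ‖v c‖) = ∑ c ∈ F, |(c : ℝ)| ^ (1 + μ) * ‖v c‖ := by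
    refine Finset.sum_congr rfl fun c _ => ?_
    by_cases h : c = 0
    · simp [h, hv0]
    · have hc : 0 < |(c : ℝ)| := by positivity
      rw [if_neg h, ← mul_assoc, ← Real.rpow_add hc]
      ring_nf
  have e2 : ∑ c ∈ F, (if c = 0 then (0 : ℝ) else |(c : ℝ)| ^ (-(s - μ - 1))) ^ 2 ≤
      Mconst (s - μ - 1) ^ 2 := by
    refine le_trans (le_of_eq ?_) (gg_M (s - μ - 1) (by linarith) F)
    refine Finset.sum_congr rfl fun c _ => ?_
    by_cases h : c = 0
    · simp [h]
    · have hc : 0 < |(c : ℝ)| := by positivity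
      rw [if_neg h, if_neg h, ← Real.rpow_natCast, ← Real.rpow_mul hc.le]
      congr 1; push_cast; ring
  have e3 : ∑ c ∈ F, (|(c : ℝ)| ^ s * ‖v c‖) ^ 2 = ∑ k ∈ F, |(k : ℝ)| ^ (2 * s) * ‖v k‖ ^ 2 := by
    refine Finset.sum_congr rfl fun c _ => ?_
    rw [mul_pow, ← Real.rpow_natCast, ← Real.rpow_mul (abs_nonneg _)]
    congr 2; push_cast; ring
  rw [e1, e3] at hcs
  have hE : 0 ≤ ∑ k ∈ F, |(k : ℝ)| ^ (2 * s) * ‖v k‖ ^ 2 :=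
    Finset.sum_nonneg fun k _ => by positivity
  have hM : 0 ≤ Mconst (s - μ - 1) := Real.sqrt_nonneg _
  refine abs_le_of_sq_le_sq' ?_ (by positivity) |>.2
  rw [mul_pow, Real.sq_sqrt hE]
  exact hcs.trans (mul_le_mul_of_nonneg_right e2 hE)

lemma gg_cyc {A : Type*} [AddCommMonoid A] (F : Finset ℤ) (f : ℤ → ℤ → ℤ → A) :
    ∑ a ∈ F, ∑ b ∈ F, ∑ c ∈ F, f b c a = ∑ a ∈ F, ∑ b ∈ F, ∑ c ∈ F, f a b c := by
  rw [Finset.sum_comm]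
  exact Finset.sum_congr rfl fun a _ => Finset.sum_comm

lemma gg_tri (μ : ℝ) (S : ℤ → ℤ → ℤ → ℂ)
    (hS0 : ∀ k m n : ℤ, k * m * n = 0 → S k m n = 0)
    (hScyc : ∀ k m n : ℤ, S k m n = S m n k)
    (C : ℝ) (hC : 0 < C)
    (hSbound : ∀ k m n : ℤ, ‖S k m n‖ ≤
      C * min (|(k : ℝ)| ^ μ) (min (|(m : ℝ)| ^ μ) (|(n : ℝ)| ^ μ)))
    (s : ℝ) (hs : μ + 3 / 2 < s)
    (Cs : ℝ) (hCs0 : 0 ≤ Cs)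
    (hCs : ∀ k m n : ℝ, k + m + n = 0 →
      |k * |k| ^ (2 * s) + m * |m| ^ (2 * s) + n * |n| ^ (2 * s)| ≤
        Cs * (|k| ^ s * |m| ^ s * |n| + |n| ^ s * |k| ^ s * |m| + |m| ^ s * |n| ^ s * |k|))
    (F : Finset ℤ) (v : ℤ → ℂ) (hv0 : v 0 = 0) :
    ‖∑ a ∈ F, ∑ b ∈ F, ∑ c ∈ F, (((a : ℝ) * |(a : ℝ)| ^ (2 * s) : ℝ) : ℂ) *
      (if a + b + c = 0 then S a b c * v a * v b * v c else 0)‖ ≤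
    C * Cs * Mconst (s - μ - 1) * Real.sqrt (∑ k ∈ F, |(k : ℝ)| ^ (2 * s) * ‖v k‖ ^ 2) *
      (∑ k ∈ F, |(k : ℝ)| ^ (2 * s) * ‖v k‖ ^ 2) := by
  set w : ℤ → ℝ := fun a => (a : ℝ) * |(a : ℝ)| ^ (2 * s) with hw
  set I : ℤ → ℤ → ℤ → ℂ := fun a b c =>
    if a + b + c = 0 then S a b c * v a * v b * v c else 0 with hI
  set E := ∑ k ∈ F, |(k : ℝ)| ^ (2 * s) * ‖v k‖ ^ 2 with hE
  have hE0 : 0 ≤ E := Finset.sum_nonneg fun k _ => by positivity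
  have hIcyc : ∀ a b c, I a b c = I b c a := by
    intro a b c
    simp only [hI]
    refine if_congr ⟨fun h => by omega, fun h => by omega⟩ ?_ rfl
    rw [hScyc]; ring
  set J := ∑ a ∈ F, ∑ b ∈ F, ∑ c ∈ F, (w a : ℂ) * I a b c with hJ
  change ‖J‖ ≤ _
  have hJ2 : ∑ a ∈ F, ∑ b ∈ F, ∑ c ∈ F, (w b : ℂ) * I a b c = J := by
    rw [hJ, ← gg_cyc F (fun a b c => (w a : ℂ) * I a b c)]
    simp only [← hIcyc]
  have hJ3 : ∑ a ∈ F, ∑ b ∈ F, ∑ c ∈ F, (w c : ℂ) * I a b c = J := by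
    rw [← hJ2, ← gg_cyc F (fun a b c => (w b : ℂ) * I a b c)]
    simp only [← hIcyc]
  have h3J : 3 * J = ∑ a ∈ F, ∑ b ∈ F, ∑ c ∈ F, ((w a + w b + w c : ℝ) : ℂ) * I a b c := by
    push_cast
    simp only [add_mul, Finset.sum_add_distrib]
    rw [hJ2, hJ3, ← hJ]; ring
  set p : ℤ → ℝ := fun a => |(a : ℝ)| ^ s with hp
  set G : ℤ → ℤ → ℤ → ℝ := fun a b c => p a * p b * |(c : ℝ)| * ‖I a b c‖ with hG
  have hpt : ∀ a b c, ‖((w a + w b + w c : ℝ) : ℂ) * I a b c‖ ≤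
      Cs * (G a b c + G c a b + G b c a) := by
    intro a b c
    by_cases h : a + b + c = 0
    · have h' : (a : ℝ) + b + c = 0 := by exact_mod_cast h
      have := hCs a b c h'
      rw [norm_mul, Complex.norm_real, Real.norm_eq_abs]
      simp only [hG, ← hIcyc, hIcyc c a b]
      calc _ ≤ _ := mul_le_mul_of_nonneg_right this (norm_nonneg _)
        _ = _ := by simp only [hp]; ring
    · have h2 : c + a + b ≠ 0 := by omega
      have h3 : b + c + a ≠ 0 := by omega
      simp [hG, hI, h, h2, h3]
  set T := ∑ a ∈ F, ∑ b ∈ F, ∑ c ∈ F, G a b c with hT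
  have hT2 : ∑ a ∈ F, ∑ b ∈ F, ∑ c ∈ F, G b c a = T := gg_cyc F G
  have hT3 : ∑ a ∈ F, ∑ b ∈ F, ∑ c ∈ F, G c a b = T := by
    rw [← hT2]; exact gg_cyc F (fun a b c => G b c a)
  have hJT : ‖J‖ ≤ Cs * T := by
    have : ‖3 * J‖ ≤ 3 * (Cs * T) := by
      rw [h3J]
      calc _ ≤ ∑ a ∈ F, ∑ b ∈ F, ∑ c ∈ F, Cs * (G a b c + G c a b + G b c a) := by
            refine norm_sum_le_of_le _ fun a _ => norm_sum_le_of_le _ fun b _ =>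
              norm_sum_le_of_le _ fun c _ => hpt a b c
        _ = 3 * (Cs * T) := by
            simp only [← Finset.mul_sum, Finset.sum_add_distrib]
            rw [hT2, hT3, ← hT]; ring
    rw [norm_mul] at this
    norm_num at this
    linarith
  set x : ℤ → ℝ := fun a => p a * ‖v a‖ with hx
  have hx0 : ∀ a, 0 ≤ x a := fun a => by simp only [hx, hp]; positivity
  have hGle : ∀ a b c, G a b c ≤
      C * ((|(c : ℝ)| ^ (1 + μ) * ‖v c‖) * (if a + b + c = 0 then x a * x b else 0)) := by
    intro a b c
    by_cases h : a + b + c = 0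
    · by_cases hc : c = 0
      · simp [hG, hc, hv0]
      have hc' : 0 < |(c : ℝ)| := by positivity
      have hb : ‖S a b c‖ ≤ C * |(c : ℝ)| ^ μ :=
        (hSbound a b c).trans (mul_le_mul_of_nonneg_left
          ((min_le_right _ _).trans (min_le_right _ _)) hC.le)
      simp only [hG, hI, h, if_true, norm_mul]
      have hA : 0 ≤ |(c : ℝ)| * ‖v c‖ * (x a * x b) :=
        mul_nonneg (by positivity) (mul_nonneg (hx0 a) (hx0 b))
      rw [Real.rpow_add hc', Real.rpow_one]
      calc _ = ‖S a b c‖ * (|(c : ℝ)| * ‖v c‖ * (x a * x b)) := by simp only [hx]; ring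
        _ ≤ _ := mul_le_mul_of_nonneg_right hb hA
        _ = _ := by ring
    · simp [hG, hI, h]
  have hxE : ∑ a ∈ F, x a ^ 2 = E := by
    refine Finset.sum_congr rfl fun c _ => ?_
    simp only [hx, hp]
    rw [mul_pow, ← Real.rpow_natCast, ← Real.rpow_mul (abs_nonneg _)]
    congr 2; push_cast; ring
  have hTle : T ≤ C * ((Mconst (s - μ - 1) * Real.sqrt E) * E) := by
    calc T ≤ ∑ a ∈ F, ∑ b ∈ F, ∑ c ∈ F, C * ((|(c : ℝ)| ^ (1 + μ) * ‖v c‖) *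
            (if a + b + c = 0 then x a * x b else 0)) :=
          Finset.sum_le_sum fun a _ => Finset.sum_le_sum fun b _ =>
            Finset.sum_le_sum fun c _ => hGle a b c
      _ = ∑ c ∈ F, ∑ a ∈ F, ∑ b ∈ F, C * ((|(c : ℝ)| ^ (1 + μ) * ‖v c‖) *
            (if a + b + c = 0 then x a * x b else 0)) :=
          (gg_cyc F (fun a b c => C * ((|(c : ℝ)| ^ (1 + μ) * ‖v c‖) *
            (if a + b + c = 0 then x a * x b else 0)))).symm
      _ = C * ∑ c ∈ F, (|(c : ℝ)| ^ (1 + μ) * ‖v c‖) * ∑ a ∈ F, ∑ b ∈ F,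
            (if a + b + c = 0 then x a * x b else 0) := by
          simp only [← Finset.mul_sum]
      _ ≤ C * ∑ c ∈ F, (|(c : ℝ)| ^ (1 + μ) * ‖v c‖) * E := by
          refine mul_le_mul_of_nonneg_left (Finset.sum_le_sum fun c _ => ?_) hC.le
          refine mul_le_mul_of_nonneg_left ?_ (by positivity)
          rw [← hxE]; exact gg_inner F x c
      _ ≤ _ := by
          rw [← Finset.sum_mul]
          exact mul_le_mul_of_nonneg_left
            (mul_le_mul_of_nonneg_right (gg_lin s μ hs F v hv0) hE0) hC.le
  calc ‖J‖ ≤ Cs * T := hJT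
    _ ≤ _ := mul_le_mul_of_nonneg_left hTle hCs0
    _ = _ := by ring

/-- ODE comparison. -/
lemma gg_ode (E D : ℝ → ℝ) (K : ℝ) (hE : ∀ t, 0 ≤ E t) (hD : ∀ t, HasDerivAt E (D t) t)
    (hb : ∀ t, |D t| ≤ 2 * (K * Real.sqrt (E t) * E t)) (hK : 0 ≤ K) (h0 : 0 < E 0) (t : ℝ)
    (ht : 0 < E t) : (Real.sqrt (E 0))⁻¹ - K * |t| ≤ (Real.sqrt (E t))⁻¹ := by
  have key : ∀ ε : ℝ, 0 < ε →
      (Real.sqrt (E 0 + ε))⁻¹ - K * |t| ≤ (Real.sqrt (E t + ε))⁻¹ := by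
    intro ε hε
    have hpos : ∀ τ, 0 < E τ + ε := fun τ => by linarith [hE τ]
    have hder : ∀ τ, HasDerivAt (fun τ => (Real.sqrt (E τ + ε))⁻¹)
        (-(D τ / (2 * Real.sqrt (E τ + ε))) / (Real.sqrt (E τ + ε)) ^ 2) τ := fun τ =>
      (((hD τ).add_const ε).sqrt (hpos τ).ne').inv (Real.sqrt_pos.2 (hpos τ)).ne'
    have hbd : ∀ τ, ‖-(D τ / (2 * Real.sqrt (E τ + ε))) / (Real.sqrt (E τ + ε)) ^ 2‖ ≤ K := by
      intro τ
      have hy := Real.sqrt_pos.2 (hpos τ)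
      have hyy := Real.sq_sqrt (hpos τ).le
      have hle : Real.sqrt (E τ) ≤ Real.sqrt (E τ + ε) := Real.sqrt_le_sqrt (by linarith)
      rw [Real.norm_eq_abs, abs_div, abs_neg, abs_div, abs_of_pos (by positivity : 0 < 2 * √(E τ + ε)),
        abs_of_pos (by positivity : 0 < √(E τ + ε) ^ 2), div_div, div_le_iff₀ (by positivity)]
      refine (hb τ).trans ?_
      have : √(E τ) * E τ ≤ √(E τ + ε) * √(E τ + ε) ^ 2 :=
        mul_le_mul hle (by rw [hyy]; linarith) (hE τ) hy.le
      nlinarith [mul_le_mul_of_nonneg_left this hK]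
    have := Convex.norm_image_sub_le_of_norm_hasDerivWithin_le (s := Set.univ) (x := 0) (y := t)
      (fun τ _ => (hder τ).hasDerivWithinAt) (fun τ _ => hbd τ) convex_univ trivial trivial
    rw [sub_zero, Real.norm_eq_abs, Real.norm_eq_abs] at this
    linarith [(abs_le.1 this).1]
  have lim : ∀ a : ℝ, 0 < a → Filter.Tendsto (fun ε : ℝ => (Real.sqrt (a + ε))⁻¹)
      (nhdsWithin 0 (Set.Ioi 0)) (nhds (Real.sqrt a)⁻¹) := by
    intro a ha
    have : ContinuousAt (fun ε : ℝ => (Real.sqrt (a + ε))⁻¹) 0 := by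
      refine ContinuousAt.inv₀ (by fun_prop) ?_
      simpa using (Real.sqrt_pos.2 ha).ne'
    have h := this.tendsto
    simp only [add_zero] at h
    exact h.mono_left nhdsWithin_le_nhds
  refine le_of_tendsto_of_tendsto ((lim _ h0).sub_const _) (lim _ ht) ?_
  filter_upwards [self_mem_nhdsWithin] with ε hε using key ε hε

/-- Gronwall bound for the Galerkin approximations: on `|t| < 1/(K_s ‖g‖_s)`,
`‖u(t)‖_s ≤ ‖g‖_s / (1 − K_s ‖g‖_s |t|)` where `g = u(·,0)`. -/
theorem galerkin_gronwall_bound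
    (μ : ℝ) (hμ : 0 ≤ μ) (S : ℤ → ℤ → ℤ → ℂ)
    (hS0 : ∀ k m n : ℤ, k * m * n = 0 → S k m n = 0)
    (hSsym : ∀ k m n : ℤ, S k m n = S k n m)
    (hScyc : ∀ k m n : ℤ, S k m n = S m n k)
    (hSreal : ∀ k m n : ℤ, S k m n = starRingEnd ℂ (S (-k) (-m) (-n)))
    (C : ℝ) (hC : 0 < C)
    (hSbound : ∀ k m n : ℤ, ‖S k m n‖ ≤
      C * min (|(k : ℝ)| ^ μ) (min (|(m : ℝ)| ^ μ) (|(n : ℝ)| ^ μ)))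
    (s : ℝ) (hs : μ + 3 / 2 < s)
    (Cs : ℝ)
    (hCs : ∀ k m n : ℝ, k + m + n = 0 →
      |k * |k| ^ (2 * s) + m * |m| ^ (2 * s) + n * |n| ^ (2 * s)| ≤
        Cs * (|k| ^ s * |m| ^ s * |n| + |n| ^ s * |k| ^ s * |m| + |m| ^ s * |n| ^ s * |k|))
    (Ks : ℝ) (hKs : Ks = C * Cs * Mconst (s - μ - 1))
    (N : ℕ) (u : ℝ → ℤ → ℂ)
    (hsupp : ∀ t : ℝ, ∀ k : ℤ, (N : ℤ) < |k| → u t k = 0)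
    (hzero : ∀ t : ℝ, u t 0 = 0)
    (hconj : ∀ t : ℝ, ∀ k : ℤ, u t (-k) = starRingEnd ℂ (u t k))
    (heq : ∀ t : ℝ, ∀ k : ℤ, |k| ≤ (N : ℤ) →
      HasDerivAt (fun τ => u τ k)
        (-(Complex.I * (k : ℂ) * ∑' n : ℤ, S (-k) (k - n) n * u t (k - n) * u t n)) t) :
    ∀ t : ℝ, |t| < 1 / (Ks * hnorm s (u 0)) →
      hnorm s (u t) ≤ hnorm s (u 0) / (1 - Ks * hnorm s (u 0) * |t|) := by
  intro t ht
  set F : Finset ℤ := Finset.Icc (-(N : ℤ)) N with hF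
  have hmem : ∀ k : ℤ, k ∈ F ↔ |k| ≤ (N : ℤ) := fun k => by rw [hF, Finset.mem_Icc, abs_le]
  have hnot : ∀ τ k, k ∉ F → u τ k = 0 := fun τ k hk =>
    hsupp τ k (by rw [hmem] at hk; omega)
  set E : ℝ → ℝ := fun τ => ∑ k ∈ F, |(k : ℝ)| ^ (2 * s) * ‖u τ k‖ ^ 2 with hE
  have hE0 : ∀ τ, 0 ≤ E τ := fun τ => Finset.sum_nonneg fun k _ => by positivity
  have hnormE : ∀ τ, hnorm s (u τ) = Real.sqrt (E τ) := by
    intro τ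
    rw [hnorm, Real.sqrt_eq_rpow, tsum_eq_sum (s := F)]
    intro k hk
    simp [hnot τ k hk]
  have hCs0 : 0 < Cs := by
    have h := hCs 1 1 (-2) (by norm_num)
    have h2 : (1 : ℝ) < 2 ^ (2 * s) := Real.one_lt_rpow (by norm_num) (by linarith)
    have h3 : (0 : ℝ) < 2 ^ s := by positivity
    norm_num at h
    by_contra hn
    have h4 : Cs * (2 + 2 ^ s + 2 ^ s) ≤ 0 :=
      mul_nonpos_of_nonpos_of_nonneg (not_lt.1 hn) (by positivity)
    have h5 := h.trans h4
    have h6 := abs_nonpos_iff.1 h5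
    linarith
  have hM0 : 0 ≤ Mconst (s - μ - 1) := Real.sqrt_nonneg _
  have hK0 : 0 ≤ Ks := by rw [hKs]; positivity
  set J : ℝ → ℂ := fun τ => ∑ a ∈ F, ∑ b ∈ F, ∑ c ∈ F,
    (((a : ℝ) * |(a : ℝ)| ^ (2 * s) : ℝ) : ℂ) *
      (if a + b + c = 0 then S a b c * u τ a * u τ b * u τ c else 0) with hJ
  have hJb : ∀ τ, ‖J τ‖ ≤ Ks * Real.sqrt (E τ) * E τ := by
    intro τ
    rw [hKs]
    exact gg_tri μ S hS0 hScyc C hC hSbound s hs Cs hCs0.le hCs F (u τ) (hzero τ)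
  have hder : ∀ τ, HasDerivAt E (2 * (Complex.I * J τ).re) τ := by
    intro τ
    have h1 : HasDerivAt E (∑ k ∈ F, |(k : ℝ)| ^ (2 * s) * (2 * inner ℝ (u τ k)
        (-(Complex.I * (k : ℂ) * ∑' n : ℤ, S (-k) (k - n) n * u τ (k - n) * u τ n)))) τ := by
      refine HasDerivAt.fun_sum fun k hk => ?_
      exact ((heq τ k ((hmem k).1 hk)).norm_sq).const_mul _
    convert h1 using 1
    have hneg : J τ = ∑ k ∈ F, ∑ b ∈ F, ∑ c ∈ F,
        ((((-k : ℤ) : ℝ) * |((-k : ℤ) : ℝ)| ^ (2 * s) : ℝ) : ℂ) *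
        (if -k + b + c = 0 then S (-k) b c * u τ (-k) * u τ b * u τ c else 0) := by
      rw [hJ]
      refine (Finset.sum_equiv (Equiv.neg ℤ) (fun i => ?_) (fun i _ => ?_)).symm
      · rw [hmem, hmem]; simp
      · rfl
    rw [hneg, Finset.mul_sum, Complex.re_sum, Finset.mul_sum]
    refine Finset.sum_congr rfl fun k hk => ?_
    have hts : ∑' n : ℤ, S (-k) (k - n) n * u τ (k - n) * u τ n =
        ∑ b ∈ F, ∑ c ∈ F, (if -k + b + c = 0 then S (-k) b c * u τ b * u τ c else 0) := by
      rw [tsum_eq_sum (s := F) (fun n hn => by rw [hnot τ n hn, mul_zero]), Finset.sum_comm]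
      refine Finset.sum_congr rfl fun n _ => ?_
      have : ∀ b ∈ F, (if -k + b + n = 0 then S (-k) b n * u τ b * u τ n else 0) =
          if b = k - n then S (-k) b n * u τ b * u τ n else 0 := fun b _ =>
        if_congr ⟨fun h => by omega, fun h => by omega⟩ rfl rfl
      rw [Finset.sum_congr rfl this, Finset.sum_ite_eq']
      split_ifs with hh
      · rfl
      · rw [hnot τ _ hh]; ring
    rw [hts]
    set P := ∑ b ∈ F, ∑ c ∈ F, (if -k + b + c = 0 then S (-k) b c * u τ b * u τ c else 0) with hP
    have hin : ∑ b ∈ F, ∑ c ∈ F,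
        ((((-k : ℤ) : ℝ) * |((-k : ℤ) : ℝ)| ^ (2 * s) : ℝ) : ℂ) *
        (if -k + b + c = 0 then S (-k) b c * u τ (-k) * u τ b * u τ c else 0) =
        ((|(k : ℝ)| ^ (2 * s) : ℝ) : ℂ) * (-(k : ℂ) * starRingEnd ℂ (u τ k) * P) := by
      rw [hP]
      simp only [Finset.mul_sum]
      refine Finset.sum_congr rfl fun b _ => Finset.sum_congr rfl fun c _ => ?_
      rw [hconj]
      push_cast
      rw [abs_neg]
      split_ifs <;> ring
    rw [hin, Complex.inner]
    rw [show Complex.I * (((|(k : ℝ)| ^ (2 * s) : ℝ) : ℂ) * (-(k : ℂ) * starRingEnd ℂ (u τ k) * P))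
      = ((|(k : ℝ)| ^ (2 * s) : ℝ) : ℂ) * (starRingEnd ℂ (u τ k) * -(Complex.I * (k : ℂ) * P))
      by ring, Complex.re_ofReal_mul]
    ring
  have hDb : ∀ τ, |2 * (Complex.I * J τ).re| ≤ 2 * (Ks * Real.sqrt (E τ) * E τ) := by
    intro τ
    rw [abs_mul, abs_two]
    have h := Complex.abs_re_le_norm (Complex.I * J τ)
    rw [norm_mul, Complex.norm_I, one_mul] at h
    linarith [hJb τ]
  rw [hnormE] at ht
  rw [hnormE, hnormE]
  have hprod : 0 < Ks * Real.sqrt (E 0) := by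
    by_contra hn
    have : 1 / (Ks * Real.sqrt (E 0)) ≤ 0 := one_div_nonpos.2 (not_lt.1 hn)
    linarith [abs_nonneg t]
  have hg : 0 < Real.sqrt (E 0) := pos_of_mul_pos_right hprod hK0
  have hden : 0 < 1 - Ks * Real.sqrt (E 0) * |t| := by
    rw [lt_div_iff₀ hprod] at ht
    linarith
  rcases (hE0 t).eq_or_lt with h | h
  · rw [← h, Real.sqrt_zero]; positivity
  · have hk := gg_ode E _ Ks hE0 hder hDb hK0 (Real.sqrt_pos.1 hg) t h
    have hy := Real.sqrt_pos.2 h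
    rw [le_div_iff₀ hden]
    have := mul_le_mul_of_nonneg_left hk (mul_pos hy hg).le
    have e1 : √(E t) * √(E 0) * ((√(E 0))⁻¹ - Ks * |t|) = √(E t) * (1 - Ks * √(E 0) * |t|) := by
      field_simp
    have e2 : √(E t) * √(E 0) * (√(E t))⁻¹ = √(E 0) := by field_simp
    rw [e1, e2] at this
    exact this
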